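/- Let F be a finite field. The triple (M_∞(F), ≤, r) is a topological Ramsey space. -/

import Mathlib

open Topology

section Ellentuck

variable {R α : Type*}

/-- The basic set `[a,A] = {B ∈ R : B ≤ A and r_n(B) = a for some n}` of the
Ellentuck topology determined by a quasi-order `le` and approximation
mappings `r`. -/
def EllSet (le : R → R → Prop) (r : ℕ → R → α) (a : α) (A : R) : Set R :=
  {B | le B A ∧ ∃ n, r n B = a}

/-- The Ellentuck topology on `R`, generated by the basic sets `[a,A]`. -/
def EllTop (le : R → R → Prop) (r : ℕ → R → α) : TopologicalSpace R :=
  TopologicalSpace.generateFrom {s | ∃ a A, s = EllSet le r a A}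

/-- A set `S ⊆ R` is Ramsey: for every nonempty `[a,A]` there is `B ∈ [a,A]`
with `[a,B] ⊆ S` or `[a,B] ∩ S = ∅`. -/
def IsRamseySet (le : R → R → Prop) (r : ℕ → R → α) (S : Set R) : Prop :=
  ∀ (a : α) (A : R), (EllSet le r a A).Nonempty →
    ∃ B ∈ EllSet le r a A, EllSet le r a B ⊆ S ∨ EllSet le r a B ∩ S = ∅

/-- A set `S ⊆ R` is Ramsey null: for every nonempty `[a,A]` there is
`B ∈ [a,A]` with `[a,B] ∩ S = ∅`. -/
def IsRamseyNullSet (le : R → R → Prop) (r : ℕ → R → α) (S : Set R) : Prop :=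
  ∀ (a : α) (A : R), (EllSet le r a A).Nonempty →
    ∃ B ∈ EllSet le r a A, EllSet le r a B ∩ S = ∅

/-- A set has the property of Baire with respect to a topology `t`: it is the
symmetric difference of a `t`-open set and a `t`-meager set. -/
def HasPropertyOfBaire (t : TopologicalSpace R) (S : Set R) : Prop :=
  ∃ U M : Set R, IsOpen[t] U ∧ @IsMeagre R t M ∧ S = symmDiff U M

/-- `(R, ≤, r)` is a topological Ramsey space: every subset of `R` with the
property of Baire in the Ellentuck topology is Ramsey, and every
Ellentuck-meager subset is Ramsey null. -/
def IsTopRamseySpace (le : R → R → Prop) (r : ℕ → R → α) : Prop :=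
  (∀ S : Set R, HasPropertyOfBaire (EllTop le r) S → IsRamseySet le r S) ∧
  (∀ S : Set R, @IsMeagre R (EllTop le r) S → IsRamseyNullSet le r S)

end Ellentuck

/-- The position of the leading (first nonzero) entry of the `n`-th column of
a matrix `A : ℕ → ℕ → F` (`A n j` = entry of column `n`, row `j`). -/
noncomputable def leadPos {F : Type} [Field F] (A : ℕ → ℕ → F) (n : ℕ) : ℕ :=
  sInf {j | A n j ≠ 0}

/-- `M_∞(F)`: the reduced (column) echelon `ℕ × ℕ` matrices over `F`: all
columns nonzero, leading positions strictly increasing, leading entries `1`,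
and each leading position zero in the other columns. -/
def Minf (F : Type) [Field F] : Set (ℕ → ℕ → F) :=
  {A | (∀ n, ∃ j, A n j ≠ 0) ∧ StrictMono (leadPos A) ∧
       (∀ n, A n (leadPos A n) = 1) ∧ ∀ n n', n' ≠ n → A n' (leadPos A n) = 0}

/-- The product topology on `F^ℕ` with `F` discrete. -/
def topCol (F : Type) [Field F] : TopologicalSpace (ℕ → F) :=
  @Pi.topologicalSpace ℕ (fun _ => F) (fun _ => ⊥)

/-- `A ≤ B`: every column of `A` belongs to the closure (in `F^ℕ` with the
product topology, `F` discrete) of the linear span of the columns of `B`. -/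
def Mle (F : Type) [Field F] (A B : ℕ → ℕ → F) : Prop :=
  ∀ n, A n ∈ @closure (ℕ → F) (topCol F)
    ((Submodule.span F (Set.range B) : Submodule F (ℕ → F)) : Set (ℕ → F))

/-- The approximation map: `r(0,A) = ∅` and `r(n+1,A)` is the restriction of
`A` (as a graph) to `n × p_n(A)`, i.e. the first `n` columns truncated to
their first `p_n(A)` rows. -/
def rMat (F : Type) [Field F] (n : ℕ) (A : ℕ → ℕ → F) : Set ((ℕ × ℕ) × F) :=
  {q | ∃ n', n = n' + 1 ∧ q.1.1 < n' ∧ q.1.2 < leadPos A n' ∧ q.2 = A q.1.1 q.1.2}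

namespace EchelonRamsey

open Filter

section CarlsonSimpson

attribute [local instance] Ultrafilter.mul Ultrafilter.semigroup

theorem ultrafilter_map_mul {M N : Type*} [Semigroup M] [Semigroup N] (f : M →ₙ* N)
    (U V : Ultrafilter M) : (U * V).map f = U.map f * V.map f := by
  ext s
  change (∀ᶠ m in ↑(U * V), f m ∈ s) ↔
    ∀ᶠ m in (U : Filter M), ∀ᶠ m' in (V : Filter M), f m * f m' ∈ s
  rw [Ultrafilter.eventually_mul]
  simp only [map_mul]

theorem continuous_ultrafilter_map {α β : Type*} (f : α → β) :
    Continuous (Ultrafilter.map f) :=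
  ultrafilterBasis_is_basis.continuous_iff.2 <| Set.forall_mem_range.mpr fun s ↦
    ultrafilter_isOpen_basic (f ⁻¹' s)

/-- A compact right topological semigroup has a closed left ideal on which every idempotent it
contains acts as a right identity. -/
theorem exists_closed_left_ideal {M : Type*} [Nonempty M] [Semigroup M] [TopologicalSpace M]
    [CompactSpace M] [T2Space M] (hc : ∀ r : M, Continuous (· * r)) :
    ∃ L : Set M, IsClosed L ∧ L.Nonempty ∧ (∀ m, ∀ x ∈ L, m * x ∈ L) ∧
      ∀ e ∈ L, e * e = e → ∀ x ∈ L, x * e = x := by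
  let S : Set (Set M) := {L | IsClosed L ∧ L.Nonempty ∧ ∀ m, ∀ x ∈ L, m * x ∈ L}
  obtain ⟨L, hL⟩ : ∃ L, Minimal (· ∈ S) L := by
    refine zorn_superset _ fun c hcs hch => ?_
    refine ⟨⋂₀ c, ⟨isClosed_sInter fun t ht => (hcs ht).1, ?_, fun m x hx => ?_⟩, fun s hs =>
      Set.sInter_subset_of_mem hs⟩
    · obtain rfl | hne := c.eq_empty_or_nonempty
      · rw [Set.sInter_empty]
        exact Set.univ_nonempty
      have : Nonempty c := hne.coe_sort
      rw [Set.sInter_eq_iInter]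
      exact IsCompact.nonempty_iInter_of_directed_nonempty_isCompact_isClosed _
        (DirectedOn.directed_val (IsChain.directedOn hch.symm)) (fun i => (hcs i.prop).2.1)
        (fun i => (hcs i.prop).1.isCompact) (fun i => (hcs i.prop).1)
    · rw [Set.mem_sInter] at hx ⊢
      exact fun t ht => (hcs ht).2.2 m x (hx t ht)
  refine ⟨L, hL.prop.1, hL.prop.2.1, hL.prop.2.2, fun e he hee x hx => ?_⟩
  have himg : (· * e) '' L = L := by
    apply hL.eq_of_subset
    · refine ⟨(hc e).isClosedMap _ hL.prop.1, hL.prop.2.1.image _, ?_⟩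
      rintro m _ ⟨y, hy, rfl⟩
      exact ⟨m * y, hL.prop.2.2 m y hy, mul_assoc _ _ _⟩
    · rintro _ ⟨y, hy, rfl⟩
      exact hL.prop.2.2 y e he
  obtain ⟨y, -, rfl⟩ := himg.symm ▸ hx
  simp only [mul_assoc, hee]

variable {A : Type*}

/-- Substitution of the letter `a` for the variable `none` in a variable word. -/
def subst (a : A) : FreeMonoid (Option A) →* FreeMonoid A :=
  FreeMonoid.map fun o => o.getD a

theorem exists_left_variable_ultrafilter (A : Type*) :
    ∃ (p : Ultrafilter (FreeMonoid A)) (q : Ultrafilter (FreeMonoid (Option A))),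
      (∀ᶠ w in (q : Filter (FreeMonoid (Option A))), ∃ v, w = FreeMonoid.of none * v) ∧
      (∀ a, p * q.map (subst a) = p) ∧
      ∀ a b, q.map (subst a) * q.map (subst b) = q.map (subst a) := by
  obtain ⟨L, hLc, ⟨p, hp⟩, hLm, hLe⟩ :=
    exists_closed_left_ideal (M := Ultrafilter (FreeMonoid A)) Ultrafilter.continuous_mul_left
  let Q : Set (Ultrafilter (FreeMonoid (Option A))) :=
    {q | {w | ∃ v, w = FreeMonoid.of none * v} ∈ q} ∩ ⋂ a, {q | q.map (subst a) ∈ L}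
  have hmap (a : A) (U V : Ultrafilter (FreeMonoid (Option A))) :
      (U * V).map (subst a) = U.map (subst a) * V.map (subst a) :=
    ultrafilter_map_mul (subst a).toMulHom U V
  obtain ⟨q, ⟨hq1, hq2⟩, hqq⟩ : ∃ q ∈ Q, q * q = q := by
    refine exists_idempotent_in_compact_subsemigroup Ultrafilter.continuous_mul_left Q ?_ ?_ ?_
    · refine ⟨(pure (FreeMonoid.of none) : Ultrafilter _) * p.map (FreeMonoid.map some), ?_, ?_⟩
      · have h : ∀ᶠ w in (p.map (FreeMonoid.map some) : Filter (FreeMonoid (Option A))),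
            ∃ v, FreeMonoid.of none * w = FreeMonoid.of none * v :=
          Eventually.of_forall fun v => ⟨v, rfl⟩
        exact h
      · rw [Set.mem_iInter]
        intro a
        change Ultrafilter.map _ _ ∈ L
        rw [hmap, Ultrafilter.map_map]
        have : (subst a : FreeMonoid (Option A) → FreeMonoid A) ∘ FreeMonoid.map some = id := by
          funext w
          exact FreeMonoid.map_map.trans (DFunLike.congr_fun FreeMonoid.map_id w)
        rw [this, Ultrafilter.map_id]
        exact hLm _ _ hp
    · refine (IsClosed.inter (ultrafilter_isClosed_basic _) (isClosed_iInter fun a => ?_)).isCompact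
      exact hLc.preimage (continuous_ultrafilter_map _)
    · rintro x ⟨hx1, hx2⟩ y ⟨-, hy2⟩
      rw [Set.mem_iInter] at hx2 hy2
      refine ⟨?_, Set.mem_iInter.2 fun a => ?_⟩
      · change ∀ᶠ w in (↑(x * y) : Filter (FreeMonoid (Option A))), ∃ v, w = FreeMonoid.of none * v
        rw [Ultrafilter.eventually_mul]
        filter_upwards [hx1] with w ⟨v, hv⟩
        exact Eventually.of_forall fun u => ⟨v * u, by rw [hv, mul_assoc]⟩
      · change Ultrafilter.map _ _ ∈ L
        rw [hmap]
        exact hLm _ _ (hy2 a)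
  rw [Set.mem_iInter] at hq2
  have he (a : A) : q.map (subst a) * q.map (subst a) = q.map (subst a) := by
    rw [← hmap, hqq]
  exact ⟨p, q, hq1, fun a => hLe _ (hq2 a) (he a) p hp,
    fun a b => hLe _ (hq2 b) (he b) _ (hq2 a)⟩

theorem exists_extendible_set [Finite A] (χ : List A → Prop) :
    ∃ H : Set (FreeMonoid A), H.Nonempty ∧
      ((∀ x ∈ H, χ x.toList) ∨ ∀ x ∈ H, ¬ χ x.toList) ∧
      ∀ X ⊆ H, X.Finite → ∃ v, ∀ x ∈ X, ∀ a, x * subst a (FreeMonoid.of none * v) ∈ H := by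
  obtain ⟨p, q, hq, hp, hqq⟩ := exists_left_variable_ultrafilter A
  obtain ⟨G, hG, hχ⟩ : ∃ G ∈ p, (∀ x ∈ G, χ x.toList) ∨ ∀ x ∈ G, ¬ χ x.toList := by
    rcases p.em fun x => χ x.toList with h | h
    exacts [⟨_, h, Or.inl fun x hx => hx⟩, ⟨_, h, Or.inr fun x hx => hx⟩]
  let H : Set (FreeMonoid A) :=
    {x | x ∈ G ∧ ∀ a, ∀ᶠ w in (q : Filter (FreeMonoid (Option A))), x * subst a w ∈ G}
  have hH : H ∈ p := by
    refine Filter.inter_mem hG ?_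
    change ∀ᶠ x in (p : Filter (FreeMonoid A)),
      ∀ a, ∀ᶠ w in (q : Filter (FreeMonoid (Option A))), x * subst a w ∈ G
    rw [eventually_all]
    intro a
    have h : G ∈ p * q.map (subst a) := by rwa [hp]
    exact h
  refine ⟨H, p.nonempty_of_mem hH, hχ.imp (fun h x hx => h x hx.1) (fun h x hx => h x hx.1),
    fun X hXH hX => ?_⟩
  have key : ∀ᶠ w in (q : Filter (FreeMonoid (Option A))),
      ∀ x ∈ X, ∀ a, x * subst a w ∈ H := by
    rw [hX.eventually_all]
    intro x hx
    rw [eventually_all]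
    intro a
    refine ((hXH hx).2 a).and ?_
    rw [eventually_all]
    intro b
    have h : {y | x * y ∈ G} ∈ q.map (subst a) * q.map (subst b) := by
      rw [hqq]
      exact (hXH hx).2 a
    have h' : ∀ᶠ w in (q : Filter (FreeMonoid (Option A))),
        ∀ᶠ w' in (q : Filter (FreeMonoid (Option A))), x * (subst a w * subst b w') ∈ G := h
    simpa only [mul_assoc] using h'
  obtain ⟨w, hw, v, rfl⟩ := (key.and hq).exists
  exact ⟨v, hw⟩

/-- The left variable form of the Carlson–Simpson theorem: the infinite variable word `z` has
constants in `A` and variables indexed by `ℕ`, and `b r` is the first occurrence of variable `r`. -/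
theorem carlson_simpson [Finite A] (χ : List A → Prop) :
    ∃ (z : ℕ → A ⊕ ℕ) (b : ℕ → ℕ), StrictMono b ∧ (∀ r, z (b r) = Sum.inr r) ∧
      (∀ i r, z i = Sum.inr r → b r ≤ i) ∧
      ((∀ (g : ℕ → A) (r : ℕ), χ ((List.range (b r)).map fun i => Sum.elim id g (z i))) ∨
        ∀ (g : ℕ → A) (r : ℕ), ¬ χ ((List.range (b r)).map fun i => Sum.elim id g (z i))) := by
  obtain ⟨H, ⟨x₀, hx₀⟩, hχ, hext⟩ := exists_extendible_set χ
  let ev (g : ℕ → A) (P : List (A ⊕ ℕ)) : List A := P.map (Sum.elim id g)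
  let Inv (r : ℕ) (P : List (A ⊕ ℕ)) : Prop :=
    (∀ g, FreeMonoid.ofList (ev g P) ∈ H) ∧ ∀ s, Sum.inr s ∈ P → s < r
  have step (r : ℕ) (P : {P // Inv r P}) :
      ∃ P' : {P // Inv (r + 1) P}, ∃ t, P'.1 = P.1 ++ Sum.inr r :: t := by
    obtain ⟨P, hPH, hPs⟩ := P
    have hfin : (Set.range fun g => FreeMonoid.ofList (ev g P)).Finite := by
      refine (List.finite_length_eq A P.length).subset ?_
      rintro _ ⟨g, rfl⟩
      exact List.length_map _
    obtain ⟨v, hv⟩ := hext _ (Set.range_subset_iff.2 hPH) hfin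
    let t : List (A ⊕ ℕ) := v.toList.map fun o => o.elim (Sum.inr r) Sum.inl
    refine ⟨⟨P ++ Sum.inr r :: t, fun g => ?_, fun s hs => ?_⟩, t, rfl⟩
    · have h := hv _ ⟨g, rfl⟩ (g r)
      have h2 : ev g (P ++ Sum.inr r :: t) =
          ev g P ++ (none :: v.toList).map fun o => o.getD (g r) := by
        simp only [ev, t, List.map_append, List.map_cons, List.map_map]
        congr 2
        refine List.map_congr_left fun o _ => ?_
        cases o <;> rfl
      rw [h2]
      exact h
    · simp only [List.mem_append, List.mem_cons, Sum.inr.injEq, t, List.mem_map] at hs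
      rcases hs with hs | rfl | ⟨o, -, ho⟩
      · exact (hPs s hs).trans (Nat.lt_succ_self r)
      · exact Nat.lt_succ_self _
      · cases o with
        | none => simp only [Option.elim_none, Sum.inr.injEq] at ho; omega
        | some a => simp at ho
  choose next tl hnext using step
  have hinit : Inv 0 (x₀.toList.map Sum.inl) := by
    refine ⟨fun g => ?_, fun s hs => by simp at hs⟩
    have : ev g (x₀.toList.map Sum.inl) = x₀.toList := by
      simp only [ev, List.map_map]
      exact List.map_id _
    rw [this]
    exact hx₀
  let P (r : ℕ) : {P // Inv r P} := Nat.rec ⟨_, hinit⟩ next r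
  have hP (r : ℕ) : (P (r + 1)).1 = (P r).1 ++ Sum.inr r :: tl r (P r) := hnext r (P r)
  let b (r : ℕ) : ℕ := (P r).1.length
  have hb : StrictMono b := strictMono_nat_of_lt_succ fun r => by
    simp only [b, hP, List.length_append, List.length_cons]
    omega
  have hpre : ∀ r s, r ≤ s → (P r).1 <+: (P s).1 := by
    intro r s hrs
    induction s, hrs using Nat.le_induction with
    | base => exact List.prefix_rfl
    | succ s _ ih => exact ih.trans (hP s ▸ List.prefix_append _ _)
  have hlt (i : ℕ) : i < b (i + 1) := (Nat.lt_succ_self i).trans_le (hb.le_apply)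
  let z (i : ℕ) : A ⊕ ℕ := (P (i + 1)).1[i]'(hlt i)
  have hz (r i : ℕ) (hi : i < b r) : (P r).1[i]'hi = z i := by
    rcases le_total r (i + 1) with h | h
    · exact (hpre _ _ h).getElem hi
    · exact ((hpre _ _ h).getElem (hlt i)).symm
  have hzb (r : ℕ) : z (b r) = Sum.inr r := by
    rw [← hz (r + 1) (b r) (hb (Nat.lt_succ_self r))]
    simp [hP, b]
  have hev (g : ℕ → A) (r : ℕ) :
      ((List.range (b r)).map fun i => Sum.elim id g (z i)) = ev g (P r).1 := by
    refine List.ext_getElem (by simp [ev, b]) fun i h₁ h₂ => ?_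
    simp only [List.getElem_map, List.getElem_range, ev]
    rw [hz r i]
  refine ⟨z, b, hb, hzb, fun i r hi => ?_, ?_⟩
  · by_contra! h
    have hmem : (P r).1[i]'h ∈ (P r).1 := List.getElem_mem h
    rw [hz r i h, hi] at hmem
    exact lt_irrefl _ ((P r).2.2 r hmem)
  · simp only [hev]
    exact hχ.imp (fun h g r => h _ ((P r).2.1 g)) (fun h g r => h _ ((P r).2.1 g))

end CarlsonSimpson

section ClosedSets

variable {α : Type*}

/-- Sets of sequences closed in the product of discrete topologies. -/
def SeqClosed (S : Set (ℕ → α)) : Prop :=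
  ∀ x, (∀ N, ∃ y ∈ S, ∀ j < N, y j = x j) → x ∈ S

theorem SeqClosed.inter {S T : Set (ℕ → α)} (hS : SeqClosed S) (hT : SeqClosed T) :
    SeqClosed (S ∩ T) := fun x hx =>
  ⟨hS x fun N => let ⟨y, hy, h⟩ := hx N; ⟨y, hy.1, h⟩,
    hT x fun N => let ⟨y, hy, h⟩ := hx N; ⟨y, hy.2, h⟩⟩

theorem SeqClosed.of_finite_dependence {S : Set (ℕ → α)} (N : ℕ)
    (h : ∀ x y, (∀ j < N, y j = x j) → y ∈ S → x ∈ S) : SeqClosed S := fun x hx =>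
  let ⟨y, hy, hyx⟩ := hx N
  h x y hyx hy

theorem seqClosed_iInter {ι : Sort*} {S : ι → Set (ℕ → α)} (h : ∀ i, SeqClosed (S i)) :
    SeqClosed (⋂ i, S i) := fun x hx => Set.mem_iInter.2 fun i => h i x fun N =>
  let ⟨y, hy, hyx⟩ := hx N
  ⟨y, Set.mem_iInter.1 hy i, hyx⟩

theorem mem_closure_iff_forall_exists_eq_below [TopologicalSpace α]
    [DiscreteTopology α] {S : Set (ℕ → α)} {x : ℕ → α} :
    x ∈ closure S ↔ ∀ N, ∃ y ∈ S, ∀ j < N, y j = x j := by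
  rw [(PiNat.isTopologicalBasis_cylinders fun _ : ℕ => α).mem_closure_iff]
  constructor
  · intro h N
    obtain ⟨y, hy, hyS⟩ := h _ ⟨x, N, rfl⟩ (PiNat.self_mem_cylinder x N)
    exact ⟨y, hyS, hy⟩
  · rintro h _ ⟨z, N, rfl⟩ hx
    obtain ⟨y, hyS, hy⟩ := h N
    exact ⟨y, fun j hj => (hy j hj).trans (hx j hj), hyS⟩

theorem exists_mem_iInter [Finite α] {C : ℕ → Set (ℕ → α)} (hanti : ∀ n, C (n + 1) ⊆ C n)
    (hne : ∀ n, (C n).Nonempty) (hc : ∀ n, SeqClosed (C n)) : ∃ x, ∀ n, x ∈ C n := by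
  let _ : TopologicalSpace α := ⊥
  have : DiscreteTopology α := ⟨rfl⟩
  have hcl (n) : IsClosed (C n) := closure_subset_iff_isClosed.1 fun x hx =>
    hc n x (mem_closure_iff_forall_exists_eq_below.1 hx)
  obtain ⟨x, hx⟩ := IsCompact.nonempty_iInter_of_sequence_nonempty_isCompact_isClosed C hanti hne
    (hcl 0).isCompact hcl
  exact ⟨x, Set.mem_iInter.1 hx⟩

end ClosedSets

section LargeSubspaces

variable {F : Type*} [Field F]

/-- Closed infinite-dimensional subspaces of `F^ℕ`. -/
structure IsLarge (V : Submodule F (ℕ → F)) : Prop where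
  closed : SeqClosed (V : Set (ℕ → F))
  exists_ne_zero : ∀ N, ∃ x ∈ V, x ≠ 0 ∧ ∀ j < N, x j = 0

/-- Truncation of a sequence to its first `N` entries. -/
def trunc (F : Type*) [Field F] (N : ℕ) : (ℕ → F) →ₗ[F] (Fin N → F) :=
  LinearMap.funLeft F F Fin.val

/-- `M` is the leading position of some vector of `V`. -/
def IsPivot (V : Submodule F (ℕ → F)) (M : ℕ) : Prop :=
  ∃ x ∈ V, x M = 1 ∧ ∀ j < M, x j = 0

/-- The large subspaces of `V` with the same truncation to height `N`. -/
def Nb (N : ℕ) (V : Submodule F (ℕ → F)) : Set (Submodule F (ℕ → F)) :=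
  {U | IsLarge U ∧ U ≤ V ∧ U.map (trunc F N) = V.map (trunc F N)}

theorem trunc_eq_iff {N : ℕ} {x y : ℕ → F} :
    trunc F N x = trunc F N y ↔ ∀ j < N, x j = y j := by
  rw [funext_iff, Fin.forall_iff]
  rfl

theorem trunc_eq_zero_iff {N : ℕ} {x : ℕ → F} : trunc F N x = 0 ↔ ∀ j < N, x j = 0 := by
  rw [← map_zero (trunc F N), trunc_eq_iff]
  rfl

theorem exists_eq_below {N : ℕ} {U V : Submodule F (ℕ → F)}
    (h : U.map (trunc F N) = V.map (trunc F N)) {v : ℕ → F} (hv : v ∈ V) :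
    ∃ u ∈ U, ∀ j < N, u j = v j := by
  obtain ⟨u, hu, huv⟩ : trunc F N v ∈ U.map (trunc F N) := h ▸ Submodule.mem_map_of_mem hv
  exact ⟨u, hu, trunc_eq_iff.1 huv⟩

theorem map_trunc_eq_of_le {N : ℕ} {U V : Submodule F (ℕ → F)} (hUV : U ≤ V)
    (h : ∀ v ∈ V, ∃ u ∈ U, ∀ j < N, u j = v j) : U.map (trunc F N) = V.map (trunc F N) := by
  refine le_antisymm (Submodule.map_mono hUV) ?_
  rintro _ ⟨v, hv, rfl⟩
  obtain ⟨u, hu, huv⟩ := h v hv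
  exact ⟨u, hu, trunc_eq_iff.2 huv⟩

theorem map_trunc_eq_of_height_le {N N' : ℕ} (hN : N ≤ N') {U V : Submodule F (ℕ → F)}
    (h : U.map (trunc F N') = V.map (trunc F N')) : U.map (trunc F N) = V.map (trunc F N) := by
  have key {U V : Submodule F (ℕ → F)} (h : U.map (trunc F N') = V.map (trunc F N')) :
      U.map (trunc F N) ≤ V.map (trunc F N) := by
    rintro _ ⟨u, hu, rfl⟩
    obtain ⟨v, hv, hvu⟩ := exists_eq_below h.symm hu
    exact ⟨v, hv, trunc_eq_iff.2 fun j hj => hvu j (hj.trans_le hN)⟩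
  exact le_antisymm (key h) (key h.symm)

theorem IsPivot.of_map_trunc_eq {M N : ℕ} {U V : Submodule F (ℕ → F)} (hM : M < N)
    (h : U.map (trunc F N) = V.map (trunc F N)) (hV : IsPivot V M) : IsPivot U M := by
  obtain ⟨v, hv, hvM, hv0⟩ := hV
  obtain ⟨u, hu, huv⟩ := exists_eq_below h hv
  exact ⟨u, hu, (huv M hM).trans hvM, fun j hj => (huv j (hj.trans hM)).trans (hv0 j hj)⟩

theorem IsPivot.mono {M : ℕ} {U V : Submodule F (ℕ → F)} (hUV : U ≤ V) (h : IsPivot U M) :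
    IsPivot V M :=
  let ⟨u, hu, h⟩ := h
  ⟨u, hUV hu, h⟩

theorem isPivot_of_ne_zero {M : ℕ} {V : Submodule F (ℕ → F)} {x : ℕ → F} (hx : x ∈ V)
    (hM : x M ≠ 0) (h0 : ∀ j < M, x j = 0) : IsPivot V M :=
  ⟨(x M)⁻¹ • x, V.smul_mem _ hx, by simp [hM], fun j hj => by simp [h0 j hj]⟩

/-- A vector which vanishes below `N` vanishes up to the next pivot. -/
theorem eq_zero_of_forall_not_isPivot {M N : ℕ} {V : Submodule F (ℕ → F)}
    (hM : ∀ M' < M, N ≤ M' → ¬ IsPivot V M') {x : ℕ → F} (hx : x ∈ V) (h0 : ∀ j < N, x j = 0) :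
    ∀ j < M, x j = 0 := by
  intro j
  induction j using Nat.strong_induction_on with
  | _ j ih =>
    intro hj
    by_contra hne
    refine hM j hj ?_ (isPivot_of_ne_zero hx hne fun i hi => ih i hi (hi.trans hj))
    by_contra! hlt
    exact hne (h0 j hlt)

theorem IsLarge.exists_isPivot {V : Submodule F (ℕ → F)} (hV : IsLarge V) (N : ℕ) :
    ∃ M, N ≤ M ∧ IsPivot V M := by
  classical
  obtain ⟨x, hx, hx0, hxN⟩ := hV.exists_ne_zero N
  have hex : ∃ j, x j ≠ 0 := Function.ne_iff.1 hx0
  refine ⟨Nat.find hex, ?_, isPivot_of_ne_zero hx (Nat.find_spec hex) fun j hj => ?_⟩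
  · by_contra! h
    exact Nat.find_spec hex (hxN _ h)
  · simpa using Nat.find_min hex hj

theorem IsLarge.exists_least_isPivot {V : Submodule F (ℕ → F)} (hV : IsLarge V) (N : ℕ) :
    ∃ M, N ≤ M ∧ IsPivot V M ∧ ∀ j, N ≤ j → j < M → ¬ IsPivot V j := by
  classical
  have h := hV.exists_isPivot N
  obtain ⟨h1, h2⟩ := Nat.find_spec h
  exact ⟨Nat.find h, h1, h2, fun j hj hlt hp => Nat.find_min h hlt ⟨hj, hp⟩⟩

theorem IsPivot.exists_ne_zero {M : ℕ} {V : Submodule F (ℕ → F)} (h : IsPivot V M) :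
    ∃ x ∈ V, x ≠ 0 ∧ ∀ j < M, x j = 0 := by
  obtain ⟨x, hx, hM, h0⟩ := h
  exact ⟨x, hx, fun h => by simp [h] at hM, h0⟩

theorem IsLarge.of_frequently_isPivot {V : Submodule F (ℕ → F)}
    (hc : SeqClosed (V : Set (ℕ → F))) (h : ∀ N, ∃ M, N ≤ M ∧ IsPivot V M) : IsLarge V := by
  refine ⟨hc, fun N => ?_⟩
  obtain ⟨M, hM, hp⟩ := h N
  obtain ⟨x, hx, hx0, hxM⟩ := hp.exists_ne_zero
  exact ⟨x, hx, hx0, fun j hj => hxM j (hj.trans_le hM)⟩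

theorem nb_refl {N : ℕ} {V : Submodule F (ℕ → F)} (hV : IsLarge V) : V ∈ Nb N V :=
  ⟨hV, le_rfl, rfl⟩

theorem nb_trans {N : ℕ} {U V W : Submodule F (ℕ → F)} (hU : U ∈ Nb N V) (hV : V ∈ Nb N W) :
    U ∈ Nb N W :=
  ⟨hU.1, hU.2.1.trans hV.2.1, hU.2.2.trans hV.2.2⟩

theorem nb_anti {N N' : ℕ} (hN : N ≤ N') {U V : Submodule F (ℕ → F)} (h : U ∈ Nb N' V) :
    U ∈ Nb N V :=
  ⟨h.1, h.2.1, map_trunc_eq_of_height_le hN h.2.2⟩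

/-- The large subspace of all vectors of `V` whose truncation lies in `G`. -/
theorem IsLarge.inf_comap_trunc {V : Submodule F (ℕ → F)} (hV : IsLarge V) {N : ℕ}
    (G : Submodule F (Fin N → F)) : IsLarge (V ⊓ G.comap (trunc F N)) := by
  refine ⟨hV.closed.inter (SeqClosed.of_finite_dependence N fun x y hxy hy => ?_), fun N' => ?_⟩
  · change trunc F N x ∈ G
    rw [← trunc_eq_iff.2 hxy]
    exact hy
  · obtain ⟨x, hx, hx0, h⟩ := hV.exists_ne_zero (max N N')
    refine ⟨x, ⟨hx, ?_⟩, hx0, fun j hj => h j (hj.trans_le (le_max_right _ _))⟩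
    change trunc F N x ∈ G
    rw [trunc_eq_zero_iff.2 fun j hj => h j (hj.trans_le (le_max_left _ _))]
    exact G.zero_mem

theorem nb_inf_comap_trunc {N : ℕ} {U V : Submodule F (ℕ → F)} (hU : IsLarge U) (hUV : U ≤ V) :
    U ∈ Nb N (V ⊓ (U.map (trunc F N)).comap (trunc F N)) := by
  have hle : U ≤ V ⊓ (U.map (trunc F N)).comap (trunc F N) :=
    le_inf hUV fun u hu => Submodule.mem_map_of_mem hu
  refine ⟨hU, hle, map_trunc_eq_of_le hle fun v hv => ?_⟩
  obtain ⟨u, hu, huv⟩ := hv.2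
  exact ⟨u, hu, trunc_eq_iff.1 huv⟩

/-- A large `V' ≤ V` can be extended to a subspace with the same truncation as `V` without
adding subspaces whose truncation is that of `V'`. -/
theorem exists_amalgam {N : ℕ} {V V' : Submodule F (ℕ → F)} (hV : IsLarge V) (hV' : IsLarge V')
    (hle : V' ≤ V) :
    ∃ W ∈ Nb N V, ∀ U ≤ W, U.map (trunc F N) = V'.map (trunc F N) → U ≤ V' := by
  set G := V'.map (trunc F N) with hG
  let f : V →ₗ[F] ((Fin N → F) ⧸ G) := G.mkQ ∘ₗ trunc F N ∘ₗ V.subtype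
  obtain ⟨g, hg⟩ := f.rangeRestrict.exists_rightInverse_of_surjective f.range_rangeRestrict
  obtain ⟨g', hg'⟩ := g.exists_extend
  let τ : (Fin N → F) →ₗ[F] (ℕ → F) := V.subtype ∘ₗ g' ∘ₗ G.mkQ
  have hτV (w) : τ w ∈ V := (g' _).2
  have hτG (w) (hw : w ∈ G) : τ w = 0 := by
    simp [τ, (Submodule.Quotient.mk_eq_zero G).2 hw]
  have hτ (x) (hx : x ∈ V) : trunc F N (τ (trunc F N x)) - trunc F N x ∈ G := by
    rw [← Submodule.Quotient.eq]
    change f (g' (f ⟨x, hx⟩)) = f ⟨x, hx⟩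
    have h1 : g' (f ⟨x, hx⟩) = g (f.rangeRestrict ⟨x, hx⟩) :=
      LinearMap.congr_fun hg' (f.rangeRestrict ⟨x, hx⟩)
    rw [h1]
    exact congrArg Subtype.val (LinearMap.congr_fun hg (f.rangeRestrict ⟨x, hx⟩))
  let W : Submodule F (ℕ → F) := V ⊓ V'.comap (LinearMap.id - τ ∘ₗ trunc F N)
  have hmemW {x} : x ∈ W ↔ x ∈ V ∧ x - τ (trunc F N x) ∈ V' := Iff.rfl
  have hV'W : V' ≤ W := fun x hx => hmemW.2
    ⟨hle hx, by rw [hτG _ (Submodule.mem_map_of_mem hx), sub_zero]; exact hx⟩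
  refine ⟨W, ⟨⟨hV.closed.inter fun x hx => hV'.closed _ fun M => ?_, fun M => ?_⟩, inf_le_left,
    map_trunc_eq_of_le inf_le_left fun v hv => ?_⟩, fun U hU hUG u hu => ?_⟩
  · obtain ⟨y, hy, hyx⟩ := hx (max N M)
    refine ⟨_, hy, fun j hj => ?_⟩
    have h : trunc F N y = trunc F N x :=
      trunc_eq_iff.2 fun j hj => hyx j (hj.trans_le (le_max_left _ _))
    simp [h, hyx j (hj.trans_le (le_max_right _ _))]
  · obtain ⟨x, hx, h⟩ := hV'.exists_ne_zero M
    exact ⟨x, hV'W hx, h⟩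
  · obtain ⟨v', hv', hvv⟩ := hτ v hv
    have hG' : trunc F N v' ∈ G := Submodule.mem_map_of_mem hv'
    have htr : trunc F N (τ (trunc F N v) - v') = trunc F N v := by
      rw [map_sub, hvv]; abel
    refine ⟨τ (trunc F N v) - v', hmemW.2 ⟨V.sub_mem (hτV _) (hle hv'), ?_⟩, trunc_eq_iff.1 htr⟩
    rw [htr, sub_sub_cancel_left]
    exact V'.neg_mem hv'
  · have h : trunc F N u ∈ G := hUG ▸ Submodule.mem_map_of_mem hu
    have := (hmemW.1 (hU hu)).2
    rwa [hτG _ h, sub_zero] at this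

section Finite

variable [Finite F]

theorem exists_nb_forall_le {N : ℕ} {Ψ : Submodule F (ℕ → F) → Prop}
    (hered : ∀ U V, U ∈ Nb N V → Ψ V → Ψ U)
    (dense : ∀ V, IsLarge V → ∃ U ∈ Nb N V, Ψ U) {V : Submodule F (ℕ → F)} (hV : IsLarge V) :
    ∃ W ∈ Nb N V, ∀ U, IsLarge U → U ≤ W → Ψ U := by
  have : Finite (Submodule F (Fin N → F)) := Finite.of_injective _ SetLike.coe_injective
  suffices h : ∀ 𝒢 : Set (Submodule F (Fin N → F)), 𝒢.Finite → ∃ W ∈ Nb N V,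
      ∀ U, IsLarge U → U ≤ W → U.map (trunc F N) ∈ 𝒢 → Ψ U by
    obtain ⟨W, hW, h⟩ := h Set.univ Set.finite_univ
    exact ⟨W, hW, fun U hU hUW => h U hU hUW (Set.mem_univ _)⟩
  intro 𝒢 h𝒢
  induction 𝒢, h𝒢 using Set.Finite.induction_on with
  | empty => exact ⟨V, nb_refl hV, fun U _ _ h => absurd h (Set.notMem_empty _)⟩
  | @insert G 𝒢 _ _ ih =>
    obtain ⟨W, hW, h⟩ := ih
    by_cases hex : ∃ U, IsLarge U ∧ U ≤ W ∧ U.map (trunc F N) = G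
    · obtain ⟨U₀, hU₀, hU₀W, rfl⟩ := hex
      obtain ⟨U₁, hU₁, hΨ⟩ := dense _ (hW.1.inf_comap_trunc (U₀.map (trunc F N)))
      have hU₁G : U₁.map (trunc F N) = U₀.map (trunc F N) := by
        rw [hU₁.2.2, ← (nb_inf_comap_trunc hU₀ hU₀W).2.2]
      obtain ⟨W', hW', h'⟩ := exists_amalgam (N := N) hW.1 hU₁.1 (hU₁.2.1.trans inf_le_left)
      refine ⟨W', nb_trans hW' hW, fun U hU hUW' hmem => ?_⟩
      rcases hmem with hmem | hmem
      · have hUG : U.map (trunc F N) = U₁.map (trunc F N) := hmem.trans hU₁G.symm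
        exact hered U U₁ ⟨hU, h' U hUW' hUG, hUG⟩ hΨ
      · exact h U hU (hUW'.trans hW'.2.1) hmem
    · refine ⟨W, hW, fun U hU hUW hmem => ?_⟩
      rcases hmem with hmem | hmem
      · exact absurd ⟨U, hU, hUW, hmem⟩ hex
      · exact h U hU hUW hmem

theorem exists_fusion {Φ : ℕ → Submodule F (ℕ → F) → Prop}
    (hered : ∀ N U V, IsLarge U → U ≤ V → Φ N V → Φ N U)
    (dense : ∀ N V, IsLarge V → ∃ U ∈ Nb N V, Φ N U) (N₀ : ℕ) {V : Submodule F (ℕ → F)}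
    (hV : IsLarge V) :
    ∃ W ∈ Nb N₀ V, Φ N₀ W ∧ ∀ M, N₀ ≤ M → IsPivot W M → Φ (M + 1) W := by
  have step (s : ℕ × {V : Submodule F (ℕ → F) // IsLarge V}) :
      ∃ t : ℕ × {V : Submodule F (ℕ → F) // IsLarge V}, t.2.1 ∈ Nb s.1 s.2.1 ∧ Φ s.1 t.2.1 ∧
        ∃ M, t.1 = M + 1 ∧ s.1 ≤ M ∧ IsPivot t.2.1 M ∧
          ∀ j, s.1 ≤ j → j < M → ¬ IsPivot t.2.1 j := by
    obtain ⟨U, hU, hΦ⟩ := dense s.1 s.2.1 s.2.2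
    obtain ⟨M, hM⟩ := hU.1.exists_least_isPivot s.1
    exact ⟨(M + 1, ⟨U, hU.1⟩), hU, hΦ, M, rfl, hM⟩
  choose next hnb hΦ top htop hle hpiv hleast using step
  let s (k : ℕ) : ℕ × {V : Submodule F (ℕ → F) // IsLarge V} := next^[k] (N₀, ⟨V, hV⟩)
  have hs (k : ℕ) : s (k + 1) = next (s k) := Function.iterate_succ_apply' _ _ _
  let h (k : ℕ) : ℕ := (s k).1
  let X (k : ℕ) : Submodule F (ℕ → F) := (s k).2.1
  have hX (k : ℕ) : IsLarge (X k) := (s k).2.2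
  have hstep (k : ℕ) : X (k + 1) ∈ Nb (h k) (X k) ∧ Φ (h k) (X (k + 1)) ∧
      ∃ M, h (k + 1) = M + 1 ∧ h k ≤ M ∧ IsPivot (X (k + 1)) M ∧
        ∀ j, h k ≤ j → j < M → ¬ IsPivot (X (k + 1)) j := by
    simp only [X, h, hs]
    exact ⟨hnb _, hΦ _, top _, htop _, hle _, hpiv _, hleast _⟩
  have hmono : StrictMono h := strictMono_nat_of_lt_succ fun k => by
    obtain ⟨-, -, M, hM, hkM, -⟩ := hstep k
    omega
  have hanti : Antitone X := antitone_nat_of_succ_le fun k => (hstep k).1.2.1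
  have hXnb (k m : ℕ) : X (k + m) ∈ Nb (h k) (X k) := by
    induction m with
    | zero => exact nb_refl (hX k)
    | succ m ih =>
      exact nb_trans (nb_anti (hmono.monotone (Nat.le_add_right k m)) (hstep (k + m)).1) ih
  let W : Submodule F (ℕ → F) := ⨅ k, X k
  have hWX (k : ℕ) : W ≤ X k := iInf_le X k
  have hWc : SeqClosed (W : Set (ℕ → F)) := by
    rw [Submodule.coe_iInf]
    exact seqClosed_iInter fun k => (hX k).closed
  have hWtr (k : ℕ) : W.map (trunc F (h k)) = (X k).map (trunc F (h k)) := by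
    refine map_trunc_eq_of_le (hWX k) fun v hv => ?_
    obtain ⟨x, hx⟩ := exists_mem_iInter
      (C := fun m => (X (k + m) : Set (ℕ → F)) ∩ {x | ∀ j < h k, x j = v j})
      (fun m => Set.inter_subset_inter_left _ (hanti (Nat.le_succ _)))
      (fun m => let ⟨u, hu, huv⟩ := exists_eq_below (hXnb k m).2.2 hv; ⟨u, hu, huv⟩)
      (fun m => (hX _).closed.inter (SeqClosed.of_finite_dependence (h k)
        fun x y hxy hy j hj => (hxy j hj).symm.trans (hy j hj)))
    refine ⟨x, (Submodule.mem_iInf _).2 fun m => ?_, (hx 0).2⟩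
    exact hanti (Nat.le_add_left m k) (hx m).1
  have hWlarge : IsLarge W := by
    refine IsLarge.of_frequently_isPivot hWc fun N => ?_
    obtain ⟨-, -, M, hM, hNM, hp, -⟩ := hstep N
    exact ⟨M, hmono.le_apply.trans hNM, hp.of_map_trunc_eq (by omega) (hWtr (N + 1))⟩
  refine ⟨W, ⟨hWlarge, hWX 0, hWtr 0⟩, hered _ _ _ hWlarge (hWX 1) (hstep 0).2.1,
    fun M hM hp => ?_⟩
  obtain ⟨k, hk⟩ : ∃ k, h k = M + 1 := by
    classical
    have hex : ∃ k, M < h k := ⟨M + 1, hmono.le_apply⟩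
    obtain ⟨k, hk⟩ : ∃ k, Nat.find hex = k + 1 := by
      refine Nat.exists_eq_succ_of_ne_zero fun h0 => ?_
      have := Nat.find_spec hex
      rw [h0] at this
      exact absurd hM (not_le.2 this)
    have h1 : M < h (k + 1) := hk ▸ Nat.find_spec hex
    have h2 : h k ≤ M := not_lt.1 (Nat.find_min hex (by omega))
    obtain ⟨-, -, M', hM', -, -, hl⟩ := hstep k
    refine ⟨k + 1, ?_⟩
    have : ¬ M < M' := fun hlt => hl M h2 hlt (hp.mono (hWX _))
    omega
  rw [← hk]
  exact hered _ _ _ hWlarge (hWX _) (hstep k).2.1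

end Finite

end LargeSubspaces

section Pigeonhole

variable {F : Type*} [Field F] {N : ℕ} {U V : Submodule F (ℕ → F)} {q : ℕ → ℕ}

theorem IsLarge.exists_pivot_enum (hV : IsLarge V) (N : ℕ) :
    ∃ q : ℕ → ℕ, StrictMono q ∧ ∀ M, (∃ i, q i = M) ↔ N ≤ M ∧ IsPivot V M := by
  have hinf : (Set.ofPred fun M => N ≤ M ∧ IsPivot V M).Infinite := by
    refine Set.infinite_of_forall_exists_gt fun L => ?_
    obtain ⟨M, hM, hp⟩ := hV.exists_isPivot (max N (L + 1))
    exact ⟨M, ⟨(le_max_left _ _).trans hM, hp⟩, (le_max_right _ _).trans hM⟩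
  refine ⟨Nat.nth _, Nat.nth_strictMono hinf, fun M => ?_⟩
  exact Set.ext_iff.1 (Nat.range_nth_of_infinite hinf) M

theorem eq_zero_of_pivot_coords (hq : StrictMono q)
    (hp : ∀ M, (∃ i, q i = M) ↔ N ≤ M ∧ IsPivot V M) {m : ℕ} {x : ℕ → F} (hx : x ∈ V)
    (h0 : ∀ j < N, x j = 0) (hm : ∀ i < m, x (q i) = 0) : ∀ j < q m, x j = 0 := by
  intro j
  induction j using Nat.strong_induction_on with
  | _ j ih =>
    intro hj
    by_contra hne
    have hN : N ≤ j := by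
      by_contra! hlt
      exact hne (h0 j hlt)
    obtain ⟨i, rfl⟩ := (hp j).2 ⟨hN, isPivot_of_ne_zero hx hne fun i hi => ih i hi (hi.trans hj)⟩
    exact hne (hm i (hq.lt_iff_lt.1 hj))

/-- A vector of a large subspace can be prescribed below `N` and at all the later pivots. -/
theorem IsLarge.exists_pivot_coords [Finite F] (hV : IsLarge V) (hq : StrictMono q)
    (hp : ∀ M, (∃ i, q i = M) ↔ N ≤ M ∧ IsPivot V M) {y : ℕ → F} (hy : y ∈ V) (t : ℕ → F) :
    ∃ x ∈ V, (∀ j < N, x j = y j) ∧ ∀ i, x (q i) = t i := by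
  have hfin (m : ℕ) : ∃ x ∈ V, (∀ j < N, x j = y j) ∧ ∀ i < m, x (q i) = t i := by
    induction m with
    | zero => exact ⟨y, hy, fun _ _ => rfl, fun i hi => absurd hi (Nat.not_lt_zero i)⟩
    | succ m ih =>
      obtain ⟨x, hx, hxy, hxt⟩ := ih
      obtain ⟨hN, v, hv, hv1, hv0⟩ := (hp (q m)).1 ⟨m, rfl⟩
      refine ⟨x + (t m - x (q m)) • v, V.add_mem hx (V.smul_mem _ hv), fun j hj => ?_,
        fun i hi => ?_⟩
      · simp [hxy j hj, hv0 j (hj.trans_le hN)]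
      · rcases Nat.lt_succ_iff_lt_or_eq.1 hi with hi | rfl
        · simp [hxt i hi, hv0 _ (hq hi)]
        · simp [hv1]
  obtain ⟨x, hx⟩ := exists_mem_iInter
    (C := fun m => (V : Set (ℕ → F)) ∩ {x | (∀ j < N, x j = y j) ∧ ∀ i < m, x (q i) = t i})
    (fun m => Set.inter_subset_inter_right _ fun x hx => ⟨hx.1, fun i hi => hx.2 i (by omega)⟩)
    (fun m => hfin m)
    (fun m => hV.closed.inter (SeqClosed.of_finite_dependence (max N (q m)) fun x z hzx hz =>
      ⟨fun j hj => (hzx j (hj.trans_le (le_max_left _ _))).symm.trans (hz.1 j hj),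
        fun i hi => (hzx _ ((hq hi).trans_le (le_max_right _ _))).symm.trans (hz.2 i hi)⟩))
  exact ⟨x, (hx 0).1, (hx 0).2.1, fun i => (hx (i + 1)).2.2 i (Nat.lt_succ_self i)⟩

theorem exists_functional_of_trunc_eq_zero {j : ℕ}
    (h : ∀ u ∈ U, (∀ i < N, u i = 0) → u j = 0) :
    ∃ g : (Fin N → F) →ₗ[F] F, ∀ u ∈ U, u j = g (trunc F N u) := by
  let f : U →ₗ[F] (Fin N → F) := trunc F N ∘ₗ U.subtype
  let φ : U →ₗ[F] F := LinearMap.proj j ∘ₗ U.subtype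
  have hφ : φ ∈ LinearMap.range f.dualMap := by
    rw [LinearMap.range_dualMap_eq_dualAnnihilator_ker, Submodule.mem_dualAnnihilator]
    intro u hu
    exact h u u.2 (trunc_eq_zero_iff.1 hu)
  obtain ⟨g, hg⟩ := hφ
  exact ⟨g, fun u hu => (LinearMap.congr_fun hg ⟨u, hu⟩).symm⟩

/-- The truncation up to the row `q m` of the space of all `x ∈ V` such that, for `i < m`, the
entry of `x` in row `q i` is the value of `f i` at the first `N` entries of `x`. -/
def stem (V : Submodule F (ℕ → F)) (q : ℕ → ℕ) (m : ℕ) (f : ℕ → (Fin N → F) →ₗ[F] F) :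
    Submodule F (Fin (q m + 1) → F) :=
  (V ⊓ ⨅ i : Fin m, LinearMap.ker (LinearMap.proj (q i) - f i ∘ₗ trunc F N)).map
    (trunc F (q m + 1))

theorem mem_stem {m : ℕ} {f : ℕ → (Fin N → F) →ₗ[F] F} {y : Fin (q m + 1) → F} :
    y ∈ stem V q m f ↔
      ∃ x ∈ V, (∀ i < m, x (q i) = f i (trunc F N x)) ∧ trunc F (q m + 1) x = y := by
  simp [stem, Submodule.mem_map, Submodule.mem_iInf, Fin.forall_iff, sub_eq_zero, and_assoc]

theorem exists_nb_pigeonhole [Finite F] (hV : IsLarge V) (N : ℕ)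
    (c : (M : ℕ) → Submodule F (Fin (M + 1) → F) → Prop) :
    ∃ V' ∈ Nb N V,
      (∀ U ∈ Nb N V', ∀ M, N ≤ M → IsPivot U M → (∀ j, N ≤ j → j < M → ¬ IsPivot U j) →
        c M (U.map (trunc F (M + 1)))) ∨
      (∀ U ∈ Nb N V', ∀ M, N ≤ M → IsPivot U M → (∀ j, N ≤ j → j < M → ¬ IsPivot U j) →
        ¬ c M (U.map (trunc F (M + 1)))) := by
  obtain ⟨q, hq, hp⟩ := hV.exists_pivot_enum N
  have : Finite ((Fin N → F) →ₗ[F] F) := Finite.of_injective _ DFunLike.coe_injective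
  obtain ⟨z, b, hb, hzb, hbz, hz⟩ := carlson_simpson (A := (Fin N → F) →ₗ[F] F)
    fun ℓ => c (q ℓ.length) (stem V q ℓ.length fun i => ℓ.getD i 0)
  have hword (m : ℕ) (f : ℕ → (Fin N → F) →ₗ[F] F) :
      c (q ((List.range m).map f).length)
        (stem V q ((List.range m).map f).length fun i => ((List.range m).map f).getD i 0) ↔
      c (q m) (stem V q m f) := by
    have key : ∀ k, k = m → ∀ f', (∀ i < m, f' i = f i) →
        (c (q k) (stem V q k f') ↔ c (q m) (stem V q m f)) := by
      rintro k rfl f' hf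
      have : stem V q k f' = stem V q k f := by
        ext y
        simp only [mem_stem]
        refine exists_congr fun x => and_congr_right fun _ => and_congr_left fun _ =>
          forall₂_congr fun i hi => by rw [hf i hi]
      rw [this]
    refine key _ (by simp) _ fun i hi => ?_
    simp [List.getD_eq_getElem?_getD, hi]
  simp only [hword] at hz
  let V' : Submodule F (ℕ → F) :=
    { carrier := {x | x ∈ V ∧ ∀ i,
        x (q i) = Sum.elim (fun a => a (trunc F N x)) (fun r => x (q (b r))) (z i)}
      add_mem' := fun {x y} hx hy => ⟨V.add_mem hx.1 hy.1, fun i => by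
        have h1 := hx.2 i
        have h2 := hy.2 i
        generalize z i = w at h1 h2 ⊢
        rcases w with a | r
        · exact (congrArg₂ (· + ·) h1 h2).trans (map_add (a ∘ₗ trunc F N) x y).symm
        · exact congrArg₂ (· + ·) h1 h2⟩
      zero_mem' := ⟨V.zero_mem, fun i => by rcases z i with a | r <;> simp⟩
      smul_mem' := fun k x hx => ⟨V.smul_mem k hx.1, fun i => by
        have h1 := hx.2 i
        generalize z i = w at h1 ⊢
        rcases w with a | r
        · exact (congrArg (k * ·) h1).trans (map_smul (a ∘ₗ trunc F N) k x).symm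
        · exact congrArg (k * ·) h1⟩ }
  have hmem {x} : x ∈ V' ↔ x ∈ V ∧ ∀ i,
      x (q i) = Sum.elim (fun a => a (trunc F N x)) (fun r => x (q (b r))) (z i) := Iff.rfl
  have hV'V : V' ≤ V := fun x hx => hx.1
  have hinl {x i a} (hx : x ∈ V') (hi : z i = Sum.inl a) : x (q i) = a (trunc F N x) := by
    have := hx.2 i
    rwa [hi] at this
  have hinr {x i r} (hx : x ∈ V') (hi : z i = Sum.inr r) : x (q i) = x (q (b r)) := by
    have := hx.2 i
    rwa [hi] at this
  have hcoord {v} (hv : v ∈ V) (s : ℕ → F) :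
      ∃ x ∈ V', (∀ j < N, x j = v j) ∧ ∀ r, x (q (b r)) = s r := by
    obtain ⟨x, hx, hxv, hxt⟩ := hV.exists_pivot_coords hq hp hv
      fun i => Sum.elim (fun a => a (trunc F N v)) s (z i)
    have hb' (r : ℕ) : x (q (b r)) = s r := by rw [hxt, hzb]; rfl
    refine ⟨x, hmem.2 ⟨hx, fun i => ?_⟩, hxv, hb'⟩
    rw [hxt, trunc_eq_iff.2 hxv]
    simp only [hb']
  have hclosed : SeqClosed (V' : Set (ℕ → F)) := by
    refine fun x hx => ⟨hV.closed x fun L => ?_, fun i => ?_⟩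
    · obtain ⟨y, hy, h⟩ := hx L
      exact ⟨y, hy.1, h⟩
    · rcases hi : z i with a | r
      · obtain ⟨y, hy, h⟩ := hx (max N (q i + 1))
        have := hinl hy hi
        rwa [h _ (by omega), trunc_eq_iff.2 fun j hj => h j (by omega)] at this
      · obtain ⟨y, hy, h⟩ := hx (max (q (b r) + 1) (q i + 1))
        have := hinr hy hi
        rwa [h _ (by omega), h _ (by omega)] at this
  have hV' : V' ∈ Nb N V := by
    refine ⟨⟨hclosed, fun r => ?_⟩, hV'V, map_trunc_eq_of_le hV'V fun v hv => ?_⟩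
    · obtain ⟨x, hx, hx0, hxs⟩ := hcoord V.zero_mem (Pi.single r 1)
      refine ⟨x, hx, fun h => ?_, fun j hj => ?_⟩
      · have := hxs r
        simp [h] at this
      · refine eq_zero_of_pivot_coords (m := b r) hq hp hx.1 hx0 (fun i hi => ?_) j
          (hj.trans_le (hb.le_apply.trans hq.le_apply))
        rcases hzi : z i with a | s
        · rw [hinl hx hzi, trunc_eq_zero_iff.2 hx0, map_zero]
        · rw [hinr hx hzi, hxs, Pi.single_eq_of_ne]
          rintro rfl
          exact (hbz i s hzi).not_gt hi
    · obtain ⟨x, hx, hxv, -⟩ := hcoord hv 0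
      exact ⟨x, hx, hxv⟩
  have hstem : ∀ U ∈ Nb N V', ∀ M, N ≤ M → IsPivot U M →
      (∀ j, N ≤ j → j < M → ¬ IsPivot U j) → ∃ g r, ∃ h : M = q (b r),
        U.map (trunc F (M + 1)) =
          h ▸ stem V q (b r) fun i => Sum.elim id g (z i) := by
    intro U hU M hNM hpM hM
    have hUV' := hU.2.1
    obtain ⟨m, rfl⟩ := (hp M).2 ⟨hNM, hpM.mono (hUV'.trans hV'V)⟩
    obtain ⟨u₀, hu₀, hu₀1, hu₀0⟩ := hpM
    rcases hzm : z m with a | r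
    · have := hinl (hUV' hu₀) hzm
      rw [hu₀1, trunc_eq_zero_iff.2 fun j hj => hu₀0 j (hj.trans_le hNM), map_zero] at this
      exact absurd this one_ne_zero
    obtain rfl : m = b r := by
      refine ((hbz m r hzm).eq_or_lt.resolve_right fun hlt => ?_).symm
      have := hinr (hUV' hu₀) hzm
      rw [hu₀1, hu₀0 _ (hq hlt)] at this
      exact one_ne_zero this
    have hg (s : ℕ) : ∃ g : (Fin N → F) →ₗ[F] F, s < r →
        ∀ u ∈ U, u (q (b s)) = g (trunc F N u) := by
      by_cases hs : s < r
      · obtain ⟨g, hg⟩ := exists_functional_of_trunc_eq_zero (U := U) (N := N) (j := q (b s))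
          fun u hu hu0 => eq_zero_of_forall_not_isPivot (fun j hj hNj => hM j hNj hj) hu hu0 _
            (hq (hb hs))
        exact ⟨g, fun _ => hg⟩
      · exact ⟨0, fun h => absurd h hs⟩
    choose g hg using hg
    have hUw {u} (hu : u ∈ U) {i} (hi : i < b r) :
        u (q i) = (Sum.elim id g (z i) : (Fin N → F) →ₗ[F] F) (trunc F N u) := by
      rcases hzi : z i with a | s
      · exact hinl (hUV' hu) hzi
      · have hsr : s < r := hb.lt_iff_lt.1 ((hbz i s hzi).trans_lt hi)
        exact (hinr (hUV' hu) hzi).trans (hg s hsr u hu)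
    refine ⟨g, r, rfl, le_antisymm ?_ fun y hy => ?_⟩
    · rintro _ ⟨u, hu, rfl⟩
      exact mem_stem.2 ⟨u, hV'V (hUV' hu), fun i hi => hUw hu hi, rfl⟩
    · obtain ⟨x, hx, hxw, rfl⟩ := mem_stem.1 hy
      obtain ⟨u, hu, hux⟩ := exists_eq_below (hU.2.2.trans hV'.2.2) hx
      have h0 := eq_zero_of_pivot_coords (m := b r) (x := x - u) hq hp
        (V.sub_mem hx (hV'V (hUV' hu))) (fun j hj => by simp [hux j hj])
        (fun i hi => by simp [hxw i hi, hUw hu hi, trunc_eq_iff.2 hux])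
      refine ⟨u + (x (q (b r)) - u (q (b r))) • u₀, U.add_mem hu (U.smul_mem _ hu₀),
        trunc_eq_iff.2 fun j hj => ?_⟩
      rcases Nat.lt_succ_iff_lt_or_eq.1 hj with hj | rfl
      · simp [hu₀0 j hj, (sub_eq_zero.1 (h0 j hj))]
      · simp [hu₀1]
  refine ⟨V', hV', hz.imp (fun h U hU M h1 h2 h3 => ?_) (fun h U hU M h1 h2 h3 => ?_)⟩
  all_goals
    obtain ⟨g, r, rfl, hst⟩ := hstem U hU M h1 h2 h3
    rw [hst]
    exact h g r

end Pigeonhole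

section OpenSets

variable {F : Type*} [Field F] {V : Submodule F (ℕ → F)}

/-- Sets of large subspaces which contain a basic neighbourhood of each of their elements. -/
def IsNbOpen (𝒳 : Set (Submodule F (ℕ → F))) : Prop :=
  ∀ V ∈ 𝒳, IsLarge V → ∃ N, Nb N V ⊆ 𝒳

/-- No neighbourhood inside `Nb N V` to height `N` is contained in `𝒳`. -/
def Rejects (𝒳 : Set (Submodule F (ℕ → F))) (N : ℕ) (V : Submodule F (ℕ → F)) : Prop :=
  ∀ U ∈ Nb N V, ¬ Nb N U ⊆ 𝒳

theorem Rejects.of_mem_nb {𝒳 : Set (Submodule F (ℕ → F))} {N : ℕ} {U : Submodule F (ℕ → F)}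
    (h : Rejects 𝒳 N V) (hU : U ∈ Nb N V) : Rejects 𝒳 N U :=
  fun U' hU' => h U' (nb_trans hU' hU)

variable [Finite F]

theorem exists_diagonal {Ψ : ℕ → Submodule F (ℕ → F) → Prop}
    (hered : ∀ N U V, U ∈ Nb N V → Ψ N V → Ψ N U)
    (dense : ∀ N V, IsLarge V → ∃ U ∈ Nb N V, Ψ N U) (N₀ : ℕ) (hV : IsLarge V) :
    ∃ W ∈ Nb N₀ V, (∀ U, IsLarge U → U ≤ W → Ψ N₀ U) ∧
      ∀ M, N₀ ≤ M → IsPivot W M → ∀ U, IsLarge U → U ≤ W → Ψ (M + 1) U :=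
  exists_fusion (Φ := fun N W => ∀ U, IsLarge U → U ≤ W → Ψ N U)
    (fun _ _ _ _ hUV h U' hU' hU'U => h U' hU' (hU'U.trans hUV))
    (fun N _ hV => exists_nb_forall_le (hered N) (dense N) hV) N₀ hV

theorem IsNbOpen.exists_nb_subset_or_disjoint {𝒳 : Set (Submodule F (ℕ → F))}
    (h𝒳 : IsNbOpen 𝒳) (N₀ : ℕ) (hV : IsLarge V) :
    ∃ W ∈ Nb N₀ V, Nb N₀ W ⊆ 𝒳 ∨ ∀ U ∈ Nb N₀ W, U ∉ 𝒳 := by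
  obtain ⟨V₁, hV₁, h₁, h₁'⟩ := exists_diagonal
    (Ψ := fun N U => Nb N U ⊆ 𝒳 ∨ Rejects 𝒳 N U)
    (fun N U V hU h => h.imp (fun h U' hU' => h (nb_trans hU' hU)) fun h => h.of_mem_nb hU)
    (fun N V hV => by
      by_cases h : ∃ U ∈ Nb N V, Nb N U ⊆ 𝒳
      · obtain ⟨U, hU, h⟩ := h
        exact ⟨U, hU, Or.inl h⟩
      · push Not at h
        exact ⟨V, nb_refl hV, Or.inr h⟩) N₀ hV
  rcases h₁ V₁ hV₁.1 le_rfl with h | hrej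
  · exact ⟨V₁, hV₁, Or.inl h⟩
  let P (N : ℕ) (U : Submodule F (ℕ → F)) : Prop := U ≤ V₁ ∧ N₀ ≤ N ∧ Rejects 𝒳 N U
  let C (N : ℕ) (U : Submodule F (ℕ → F)) : Prop := ∀ U' ∈ Nb N U, ∀ M, N ≤ M → IsPivot U' M →
    (∀ j, N ≤ j → j < M → ¬ IsPivot U' j) → Rejects 𝒳 (M + 1) U'
  obtain ⟨V₂, hV₂, h₂, h₂'⟩ := exists_diagonal
    (Ψ := fun N U => C N U ∨ ∀ U' ∈ Nb N U, ¬ P N U')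
    (fun N U V hU h => h.imp (fun h U' hU' => h U' (nb_trans hU' hU))
      fun h U' hU' => h U' (nb_trans hU' hU))
    (fun N V hV => by
      by_cases h : ∃ U ∈ Nb N V, P N U
      · obtain ⟨U, hU, hUV₁, hN, hUrej⟩ := h
        obtain ⟨V', hV', hc | hc⟩ := exists_nb_pigeonhole hU.1 N
          fun M G => Nb (M + 1) (V₁ ⊓ G.comap (trunc F (M + 1))) ⊆ 𝒳
        · refine absurd (fun U' hU' => ?_) (hUrej V' hV')
          obtain ⟨M, hNM, hpM, hM⟩ := hU'.1.exists_least_isPivot N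
          exact hc U' hU' M hNM hpM hM
            (nb_inf_comap_trunc hU'.1 (hU'.2.1.trans (hV'.2.1.trans hUV₁)))
        · refine ⟨V', nb_trans hV' hU, Or.inl fun U' hU' M hNM hpM hM => ?_⟩
          have hU'V₁ := hU'.2.1.trans (hV'.2.1.trans hUV₁)
          have := (h₁' M (hN.trans hNM) (hpM.mono hU'V₁) _
            (hV₁.1.inf_comap_trunc (U'.map (trunc F (M + 1)))) inf_le_left).resolve_left
              (hc U' hU' M hNM hpM hM)
          exact this.of_mem_nb (nb_inf_comap_trunc hU'.1 hU'V₁)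
      · push Not at h
        exact ⟨V, nb_refl hV, Or.inr h⟩) N₀ hV₁.1
  refine ⟨V₂, nb_trans hV₂ hV₁, Or.inr fun U hU hU𝒳 => ?_⟩
  have hUV₁ : U ≤ V₁ := hU.2.1.trans hV₂.2.1
  have hC (h : ℕ) (hh : h = N₀ ∨ ∃ M, h = M + 1 ∧ N₀ ≤ M ∧ IsPivot U M)
      (hrej : Rejects 𝒳 h U) : C h U := by
    have hN : N₀ ≤ h := by
      rcases hh with rfl | ⟨M, rfl, hM, -⟩ <;> omega
    have : C h U ∨ ∀ U' ∈ Nb h U, ¬ P h U' := by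
      rcases hh with rfl | ⟨M, rfl, hM, hp⟩
      · exact h₂ U hU.1 hU.2.1
      · exact h₂' M hM (hp.mono hU.2.1) U hU.1 hU.2.1
    exact this.resolve_right fun h => h U (nb_refl hU.1) ⟨hUV₁, hN, hrej⟩
  have hall (L : ℕ) (hL : N₀ ≤ L) : ∃ h ≤ L,
      (h = N₀ ∨ ∃ M, h = M + 1 ∧ N₀ ≤ M ∧ IsPivot U M) ∧
      (∀ j, h ≤ j → j < L → ¬ IsPivot U j) ∧ Rejects 𝒳 h U := by
    induction L, hL using Nat.le_induction with
    | base =>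
      exact ⟨N₀, le_rfl, Or.inl rfl, fun j h1 h2 => absurd h1 (not_le.2 h2),
        hrej.of_mem_nb (nb_trans hU hV₂)⟩
    | succ L hL ih =>
      obtain ⟨h, hhL, hh, hnp, hr⟩ := ih
      by_cases hp : IsPivot U L
      · exact ⟨L + 1, le_rfl, Or.inr ⟨L, rfl, hL, hp⟩, fun j h1 h2 => absurd h1 (not_le.2 h2),
          hC h hh hr U (nb_refl hU.1) L hhL hp hnp⟩
      · refine ⟨h, by omega, hh, fun j h1 h2 => ?_, hr⟩
        rcases Nat.lt_succ_iff_lt_or_eq.1 h2 with h2 | rfl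
        · exact hnp j h1 h2
        · exact hp
  obtain ⟨N, hN⟩ := h𝒳 U hU𝒳 hU.1
  obtain ⟨M, hM, hp⟩ := hU.1.exists_isPivot (max N N₀)
  obtain ⟨h, hhM, -, hnp, hr⟩ := hall (M + 1) (by omega)
  obtain rfl : h = M + 1 := by
    by_contra hne
    exact hnp M (by omega) (Nat.lt_succ_self M) hp
  exact hr U (nb_refl hU.1) fun U' hU' => hN (nb_anti (by omega) hU')

theorem exists_nb_forall_mem {𝒟 : ℕ → Set (Submodule F (ℕ → F))} (hopen : ∀ k, IsNbOpen (𝒟 k))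
    (hdense : ∀ k N V, IsLarge V → ∃ U ∈ Nb N V, U ∈ 𝒟 k) (N₀ : ℕ) (hV : IsLarge V) :
    ∃ W ∈ Nb N₀ V, ∀ U ∈ Nb N₀ W, ∀ k, U ∈ 𝒟 k := by
  obtain ⟨W, hW, -, h⟩ := exists_diagonal (Ψ := fun N U => ∀ k ≤ N, Nb N U ⊆ 𝒟 k)
    (fun N U V hU h k hk U' hU' => h k hk (nb_trans hU' hU))
    (fun N V hV => by
      suffices h : ∀ n, ∃ U ∈ Nb N V, ∀ k < n, Nb N U ⊆ 𝒟 k by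
        obtain ⟨U, hU, h⟩ := h (N + 1)
        exact ⟨U, hU, fun k hk => h k (Nat.lt_succ_of_le hk)⟩
      intro n
      induction n with
      | zero => exact ⟨V, nb_refl hV, fun k hk => absurd hk (Nat.not_lt_zero k)⟩
      | succ n ih =>
        obtain ⟨U, hU, h⟩ := ih
        obtain ⟨U', hU', h'⟩ := (hopen n).exists_nb_subset_or_disjoint N hU.1
        refine ⟨U', nb_trans hU' hU, fun k hk => ?_⟩
        rcases Nat.lt_succ_iff_lt_or_eq.1 hk with hk | rfl
        · exact fun X hX => h k hk (nb_trans hX hU')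
        · refine h'.resolve_right fun hdis => ?_
          obtain ⟨X, hX, hX'⟩ := hdense k N U' hU'.1
          exact hdis X hX hX') N₀ hV
  refine ⟨W, hW, fun U hU k => ?_⟩
  obtain ⟨M, hM, hp⟩ := hW.1.exists_isPivot (max N₀ k)
  exact h M (by omega) hp U hU.1 hU.2.1 k (by omega) (nb_refl hU.1)

end OpenSets

section EchelonMatrices

variable {F : Type} [Field F]

theorem eq_zero_of_lt_leadPos {A : ℕ → ℕ → F} {n j : ℕ} (hj : j < leadPos A n) : A n j = 0 := by
  by_contra h
  exact Nat.notMem_of_lt_sInf hj h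

theorem leadPos_eq {A : ℕ → ℕ → F} {n M : ℕ} (hM : A n M ≠ 0) (h : ∀ j < M, A n j = 0) :
    leadPos A n = M := by
  refine le_antisymm (Nat.sInf_le hM) ?_
  by_contra! hlt
  exact Nat.sInf_mem (s := {j | A n j ≠ 0}) ⟨M, hM⟩ (h _ hlt)

/-- The closure of the linear span of the columns of `A`. -/
def closedSpan (A : ℕ → ℕ → F) : Submodule F (ℕ → F) where
  carrier := {x | ∀ N, ∃ y ∈ Submodule.span F (Set.range A), ∀ j < N, y j = x j}
  add_mem' := fun {x y} hx hy N => by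
    obtain ⟨x', hx', h1⟩ := hx N
    obtain ⟨y', hy', h2⟩ := hy N
    exact ⟨x' + y', add_mem hx' hy', fun j hj => by simp [h1 j hj, h2 j hj]⟩
  zero_mem' := fun _ => ⟨0, zero_mem _, fun _ _ => rfl⟩
  smul_mem' := fun k x hx N => by
    obtain ⟨x', hx', h1⟩ := hx N
    exact ⟨k • x', Submodule.smul_mem _ _ hx', fun j hj => by simp [h1 j hj]⟩

theorem span_le_closedSpan (A : ℕ → ℕ → F) :
    Submodule.span F (Set.range A) ≤ closedSpan A :=
  fun x hx _ => ⟨x, hx, fun _ _ => rfl⟩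

theorem mem_closedSpan_self (A : ℕ → ℕ → F) (n : ℕ) : A n ∈ closedSpan A :=
  span_le_closedSpan A (Submodule.subset_span ⟨n, rfl⟩)

theorem seqClosed_closedSpan (A : ℕ → ℕ → F) : SeqClosed (closedSpan A : Set (ℕ → F)) := by
  intro x hx N
  obtain ⟨y, hy, hyx⟩ := hx N
  obtain ⟨z, hz, hzy⟩ := hy N
  exact ⟨z, hz, fun j hj => (hzy j hj).trans (hyx j hj)⟩

theorem closedSpan_le {A : ℕ → ℕ → F} {V : Submodule F (ℕ → F)}
    (hV : SeqClosed (V : Set (ℕ → F))) : closedSpan A ≤ V ↔ ∀ n, A n ∈ V := by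
  refine ⟨fun h n => h (mem_closedSpan_self A n), fun h x hx => hV x fun N => ?_⟩
  obtain ⟨y, hy, hyx⟩ := hx N
  exact ⟨y, Submodule.span_le.2 (Set.range_subset_iff.2 h) hy, hyx⟩

theorem mle_iff {A B : ℕ → ℕ → F} : Mle F A B ↔ closedSpan A ≤ closedSpan B := by
  let _ : TopologicalSpace F := ⊥
  have : DiscreteTopology F := ⟨rfl⟩
  rw [closedSpan_le (seqClosed_closedSpan B)]
  exact forall_congr' fun n => mem_closure_iff_forall_exists_eq_below

theorem map_trunc_closedSpan (A : ℕ → ℕ → F) (N : ℕ) :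
    (closedSpan A).map (trunc F N) = Submodule.span F (Set.range fun n => trunc F N (A n)) := by
  have h : (Submodule.span F (Set.range A)).map (trunc F N) =
      Submodule.span F (Set.range fun n => trunc F N (A n)) := by
    rw [Submodule.map_span, ← Set.range_comp]
    rfl
  rw [← h]
  exact (map_trunc_eq_of_le (span_le_closedSpan A) fun x hx => hx N).symm

variable {A B : ℕ → ℕ → F}

theorem apply_leadPos (hB : B ∈ Minf F) (m n : ℕ) :
    B m (leadPos B n) = if m = n then 1 else 0 := by
  split_ifs with h
  · subst h
    exact hB.2.2.1 m
  · exact hB.2.2.2 n m h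

theorem apply_eq_zero_of_lt (hB : B ∈ Minf F) {n j : ℕ} (h : j < n) : B n j = 0 :=
  eq_zero_of_lt_leadPos (h.trans_le hB.2.1.le_apply)

theorem eq_sum_of_mem_closedSpan (hB : B ∈ Minf F) {x : ℕ → F} (hx : x ∈ closedSpan B) (j : ℕ) :
    x j = ∑ n ∈ Finset.range (j + 1), x (leadPos B n) * B n j := by
  obtain ⟨y, hy, hyx⟩ := hx (leadPos B j + 1)
  have hy_sum : y j = ∑ n ∈ Finset.range (j + 1), y (leadPos B n) * B n j := by
    clear hyx
    induction hy using Submodule.span_induction with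
    | mem x hx =>
      obtain ⟨m, rfl⟩ := hx
      simp only [apply_leadPos hB, ite_mul, one_mul, zero_mul, Finset.sum_ite_eq, Finset.mem_range]
      split_ifs with h
      · rfl
      · exact apply_eq_zero_of_lt hB (by omega)
    | zero => simp
    | add x y _ _ hx hy => simp [add_mul, Finset.sum_add_distrib, hx, hy]
    | smul k x _ hx => simp [mul_assoc, ← Finset.mul_sum, hx]
  have hj : j < leadPos B j + 1 := Nat.lt_succ_of_le hB.2.1.le_apply
  rw [← hyx j hj, hy_sum]
  refine Finset.sum_congr rfl fun n hn => ?_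
  rw [hyx]
  exact Nat.lt_succ_of_le (hB.2.1.monotone (Nat.le_of_lt_succ (Finset.mem_range.1 hn)))

theorem eq_below_of_eq_leadPos (hB : B ∈ Minf F) {x y : ℕ → F} (hx : x ∈ closedSpan B)
    (hy : y ∈ closedSpan B) {N : ℕ}
    (h : ∀ n, leadPos B n < N → x (leadPos B n) = y (leadPos B n)) : ∀ j < N, x j = y j := by
  intro j hj
  rw [eq_sum_of_mem_closedSpan hB hx, eq_sum_of_mem_closedSpan hB hy]
  refine Finset.sum_congr rfl fun n _ => ?_
  by_cases hn : leadPos B n < N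
  · rw [h n hn]
  · rw [eq_zero_of_lt_leadPos (hj.trans_le (not_lt.1 hn)), mul_zero, mul_zero]

theorem isPivot_closedSpan_iff (hB : B ∈ Minf F) {M : ℕ} :
    IsPivot (closedSpan B) M ↔ ∃ n, leadPos B n = M := by
  constructor
  · rintro ⟨x, hx, hM, h0⟩
    by_contra! hne
    have := eq_below_of_eq_leadPos hB hx (zero_mem _) (N := M + 1)
      (fun n hn => h0 _ (lt_of_le_of_ne (Nat.le_of_lt_succ hn) (hne n))) M (Nat.lt_succ_self M)
    simp [hM] at this
  · rintro ⟨n, rfl⟩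
    exact ⟨B n, mem_closedSpan_self B n, hB.2.2.1 n, fun j hj => eq_zero_of_lt_leadPos hj⟩

theorem isLarge_closedSpan (hB : B ∈ Minf F) : IsLarge (closedSpan B) :=
  IsLarge.of_frequently_isPivot (seqClosed_closedSpan B) fun N =>
    ⟨leadPos B N, hB.2.1.le_apply, (isPivot_closedSpan_iff hB).2 ⟨N, rfl⟩⟩

theorem IsLarge.exists_closedSpan_eq [Finite F] {V : Submodule F (ℕ → F)} (hV : IsLarge V) :
    ∃ B ∈ Minf F, closedSpan B = V := by
  obtain ⟨q, hq, hp⟩ := hV.exists_pivot_enum 0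
  choose B hBV _ hBq using fun n : ℕ =>
    hV.exists_pivot_coords hq hp V.zero_mem (Pi.single n (1 : F))
  have hlead (n : ℕ) : leadPos B n = q n := by
    refine leadPos_eq (by simp [hBq]) (eq_zero_of_pivot_coords hq hp (hBV n) (by simp) ?_)
    intro i hi
    rw [hBq, Pi.single_eq_of_ne hi.ne]
  refine ⟨B, ⟨fun n => ⟨q n, by simp [hBq]⟩, ?_, fun n => ?_, fun n n' hn => ?_⟩,
    le_antisymm ((closedSpan_le hV.closed).2 hBV) fun x hx N => ?_⟩
  · rwa [show leadPos B = q from funext hlead]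
  · rw [hlead, hBq, Pi.single_eq_same]
  · rw [hlead, hBq, Pi.single_eq_of_ne hn.symm]
  · let y : ℕ → F := ∑ n ∈ Finset.range N, x (q n) • B n
    have hy : y ∈ Submodule.span F (Set.range B) :=
      Submodule.sum_mem _ fun n _ => Submodule.smul_mem _ _ (Submodule.subset_span ⟨n, rfl⟩)
    have hyV : y ∈ V := Submodule.sum_mem _ fun n _ => Submodule.smul_mem _ _ (hBV n)
    refine ⟨y, hy, fun j hj => sub_eq_zero.1 (eq_zero_of_pivot_coords (m := N) (x := y - x) hq hp
      (V.sub_mem hyV hx) (by simp) (fun i hi => ?_) j (hj.trans_le hq.le_apply))⟩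
    simp [y, Finset.sum_apply, hBq, Pi.single_apply, hi]

theorem eq_of_range_eq_below {p q : ℕ → ℕ} (hp : StrictMono p) (hq : StrictMono q)
    {N : ℕ} (h : ∀ M < N, (∃ i, p i = M) ↔ ∃ i, q i = M) : ∀ i, p i < N → q i = p i := by
  intro i
  induction i using Nat.strong_induction_on with
  | _ i ih =>
    intro hi
    have hlt (l : ℕ) (hl : l < i) : q l = p l := ih l hl ((hp hl).trans hi)
    obtain ⟨k, hk⟩ := (h _ hi).1 ⟨i, rfl⟩
    have hik : i ≤ k := by
      by_contra! hki
      exact hki.ne (hp.injective ((hlt k hki).symm.trans hk))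
    have hle : q i ≤ p i := hk ▸ hq.monotone hik
    obtain ⟨k', hk'⟩ := (h _ (hle.trans_lt hi)).2 ⟨i, rfl⟩
    have hik' : i ≤ k' := by
      by_contra! hki
      exact hki.ne (hq.injective ((hlt k' hki).trans hk'))
    exact le_antisymm hle (hk' ▸ hp.monotone hik')

theorem map_trunc_closedSpan_eq_iff (hA : A ∈ Minf F) (hB : B ∈ Minf F) {N : ℕ} :
    (closedSpan A).map (trunc F N) = (closedSpan B).map (trunc F N) ↔
      ∀ n, ∀ j < N, A n j = B n j := by
  refine ⟨fun h n => ?_, fun h => ?_⟩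
  · have hpiv : ∀ M < N, (∃ i, leadPos A i = M) ↔ ∃ i, leadPos B i = M := fun M hM => by
      rw [← isPivot_closedSpan_iff hA, ← isPivot_closedSpan_iff hB]
      exact ⟨.of_map_trunc_eq hM h.symm, .of_map_trunc_eq hM h⟩
    have hAB := eq_of_range_eq_below hA.2.1 hB.2.1 hpiv
    have hBA := eq_of_range_eq_below hB.2.1 hA.2.1 fun M hM => (hpiv M hM).symm
    by_cases hn : leadPos A n < N
    · obtain ⟨u, hu, huA⟩ := exists_eq_below h.symm (mem_closedSpan_self A n)
      have := eq_below_of_eq_leadPos hB hu (mem_closedSpan_self B n) (N := N) fun m hm => by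
        rw [huA _ hm, apply_leadPos hB, ← hBA m hm, apply_leadPos hA]
      exact fun j hj => (huA j hj).symm.trans (this j hj)
    · have hn' : ¬ leadPos B n < N := fun h => hn (hBA n h ▸ h)
      intro j hj
      rw [eq_zero_of_lt_leadPos (hj.trans_le (not_lt.1 hn)),
        eq_zero_of_lt_leadPos (hj.trans_le (not_lt.1 hn'))]
  · rw [map_trunc_closedSpan, map_trunc_closedSpan]
    congr 2
    exact funext fun n => trunc_eq_iff.2 (h n)

theorem closedSpan_injOn : Set.InjOn closedSpan (Minf F) := fun A hA B hB h =>
  funext fun n => funext fun j =>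
    (map_trunc_closedSpan_eq_iff hA hB (N := j + 1)).1 (by rw [h]) n j (Nat.lt_succ_self j)

theorem rMat_zero (B : ℕ → ℕ → F) : rMat F 0 B = ∅ := by
  ext q
  simp [rMat]

theorem mem_rMat_succ {m i j : ℕ} {x : F} :
    ((i, j), x) ∈ rMat F (m + 1) B ↔ i < m ∧ j < leadPos B m ∧ x = B i j := by
  simp [rMat]

theorem exists_rMat_eq_iff (hA : A ∈ Minf F) (hB : B ∈ Minf F) {m : ℕ} (hm : 0 < m) :
    (∃ n, rMat F n A = rMat F (m + 1) B) ↔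
      (closedSpan A).map (trunc F (leadPos B m + 1)) =
        (closedSpan B).map (trunc F (leadPos B m + 1)) := by
  rw [map_trunc_closedSpan_eq_iff hA hB]
  constructor
  · rintro ⟨n, hn⟩
    have hpos : 0 < leadPos B m := hm.trans_le hB.2.1.le_apply
    obtain _ | n := n
    · have h : ((0, 0), B 0 0) ∈ rMat F (m + 1) B := mem_rMat_succ.2 ⟨hm, hpos, rfl⟩
      rw [← hn, rMat_zero] at h
      exact absurd h (Set.notMem_empty _)
    have hiff (i j : ℕ) (x : F) : (i < n ∧ j < leadPos A n ∧ x = A i j) ↔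
        (i < m ∧ j < leadPos B m ∧ x = B i j) := by
      rw [← mem_rMat_succ, ← mem_rMat_succ, hn]
    have hn0 : 0 < n := ((hiff 0 0 _).2 ⟨hm, hpos, rfl⟩).1
    have hApos : 0 < leadPos A n := hn0.trans_le hA.2.1.le_apply
    obtain rfl : n = m := eq_of_forall_lt_iff fun i =>
      ⟨fun h => ((hiff i 0 _).1 ⟨h, hApos, rfl⟩).1, fun h => ((hiff i 0 _).2 ⟨h, hpos, rfl⟩).1⟩
    have hlead : leadPos A n = leadPos B n := eq_of_forall_lt_iff fun j =>
      ⟨fun h => ((hiff 0 j _).1 ⟨hm, h, rfl⟩).2.1, fun h => ((hiff 0 j _).2 ⟨hm, h, rfl⟩).2.1⟩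
    intro i j hj
    rcases Nat.lt_succ_iff_lt_or_eq.1 hj with hj | rfl
    · rcases lt_or_ge i n with hi | hi
      · exact ((hiff i j _).1 ⟨hi, hlead ▸ hj, rfl⟩).2.2
      · rw [eq_zero_of_lt_leadPos (A := B) (hj.trans_le (hB.2.1.monotone hi)),
          eq_zero_of_lt_leadPos (hj.trans_le (hlead.ge.trans (hA.2.1.monotone hi)))]
    · rw [apply_leadPos hB, ← hlead, apply_leadPos hA]
  · intro h
    have hlead : leadPos A m = leadPos B m := by
      refine leadPos_eq ?_ fun j hj => ?_
      · rw [h m _ (Nat.lt_succ_self _), hB.2.2.1]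
        exact one_ne_zero
      · rw [h m j (by omega), eq_zero_of_lt_leadPos hj]
    refine ⟨m + 1, ?_⟩
    ext ⟨⟨i, j⟩, x⟩
    rw [mem_rMat_succ, mem_rMat_succ, hlead]
    refine and_congr_right fun _ => and_congr_right fun hj => ?_
    rw [h i j (by omega)]

theorem exists_height_rMat (hB : B ∈ Minf F) (k : ℕ) : ∃ N, ∀ A ∈ Minf F,
    ((∃ n, rMat F n A = rMat F k B) ↔
      (closedSpan A).map (trunc F N) = (closedSpan B).map (trunc F N)) := by
  rcases lt_or_ge k 2 with hk | hk
  · refine ⟨0, fun A hA => iff_of_true ⟨0, ?_⟩ (Subsingleton.elim _ _)⟩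
    rw [rMat_zero]
    interval_cases k
    · exact (rMat_zero B).symm
    · ext ⟨⟨i, j⟩, x⟩
      rw [mem_rMat_succ]
      simp
  · obtain ⟨m, rfl⟩ := Nat.exists_eq_add_of_le' hk
    exact ⟨_, fun A hA => exists_rMat_eq_iff hA hB m.succ_pos⟩

end EchelonMatrices

section Ellentuck

variable {F : Type} [Field F]

theorem mem_ellSet_iff {a : Set ((ℕ × ℕ) × F)} {A B : ↥(Minf F)} :
    B ∈ EllSet (fun A B : ↥(Minf F) => Mle F A.val B.val) (fun n A => rMat F n A.val) a A ↔
      closedSpan B.val ≤ closedSpan A.val ∧ ∃ n, rMat F n B.val = a :=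
  and_congr_left fun _ => mle_iff

theorem isOpen_ellSet (a : Set ((ℕ × ℕ) × F)) (A : ↥(Minf F)) :
    IsOpen[EllTop (fun A B : ↥(Minf F) => Mle F A.val B.val) (fun n A => rMat F n A.val)]
      (EllSet (fun A B : ↥(Minf F) => Mle F A.val B.val) (fun n A => rMat F n A.val) a A) :=
  TopologicalSpace.isOpen_generateFrom_of_mem ⟨a, A, rfl⟩

theorem exists_forall_mem_nb_mem_of_isOpen {X : Set ↥(Minf F)}
    (hX : IsOpen[EllTop (fun A B : ↥(Minf F) => Mle F A.val B.val)
      (fun n A => rMat F n A.val)] X) {B : ↥(Minf F)} (hB : B ∈ X) :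
    ∃ N, ∀ A : ↥(Minf F), closedSpan A.val ∈ Nb N (closedSpan B.val) → A ∈ X := by
  induction hX with
  | basic s hs =>
    obtain ⟨a, C, rfl⟩ := hs
    obtain ⟨hBC, k, rfl⟩ := mem_ellSet_iff.1 hB
    obtain ⟨N, hN⟩ := exists_height_rMat B.2 k
    exact ⟨N, fun A hA => mem_ellSet_iff.2 ⟨hA.2.1.trans hBC, (hN A A.2).2 hA.2.2⟩⟩
  | univ => exact ⟨0, fun _ _ => Set.mem_univ _⟩
  | inter s t _ _ hs ht =>
    obtain ⟨N, hN⟩ := hs hB.1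
    obtain ⟨N', hN'⟩ := ht hB.2
    exact ⟨max N N', fun A hA =>
      ⟨hN A (nb_anti (le_max_left _ _) hA), hN' A (nb_anti (le_max_right _ _) hA)⟩⟩
  | sUnion S _ ih =>
    obtain ⟨s, hs, hBs⟩ := hB
    obtain ⟨N, hN⟩ := ih s hs hBs
    exact ⟨N, fun A hA => ⟨s, hs, hN A hA⟩⟩

theorem exists_ellSet_subset_nb (N : ℕ) (B : ↥(Minf F)) : ∃ a,
    B ∈ EllSet (fun A B : ↥(Minf F) => Mle F A.val B.val) (fun n A => rMat F n A.val) a B ∧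
    ∀ A ∈ EllSet (fun A B : ↥(Minf F) => Mle F A.val B.val) (fun n A => rMat F n A.val) a B,
      closedSpan A.val ∈ Nb N (closedSpan B.val) := by
  refine ⟨rMat F (N + 2) B.val, mem_ellSet_iff.2 ⟨le_rfl, _, rfl⟩, fun A hA => ?_⟩
  obtain ⟨hAB, hA⟩ := mem_ellSet_iff.1 hA
  have hle : N + 1 ≤ leadPos B.val (N + 1) := B.2.2.1.le_apply
  exact ⟨isLarge_closedSpan A.2, hAB,
    map_trunc_eq_of_height_le (by omega) ((exists_rMat_eq_iff A.2 B.2 (m := N + 1) N.succ_pos).1 hA)⟩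

/-- The closed spans of the matrices in `X`. -/
def closedSpans (X : Set ↥(Minf F)) : Set (Submodule F (ℕ → F)) :=
  (fun B : ↥(Minf F) => closedSpan B.val) '' X

theorem closedSpan_mem_closedSpans {X : Set ↥(Minf F)} {B : ↥(Minf F)} :
    closedSpan B.val ∈ closedSpans X ↔ B ∈ X :=
  Function.Injective.mem_set_image fun A B h => Subtype.ext (closedSpan_injOn A.2 B.2 h)

variable [Finite F]

theorem exists_height_ellSet {a : Set ((ℕ × ℕ) × F)} {A C : ↥(Minf F)}
    (hC : C ∈ EllSet (fun A B : ↥(Minf F) => Mle F A.val B.val) (fun n A => rMat F n A.val) a A) :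
    ∃ N, ∀ W ∈ Nb N (closedSpan C.val),
      ∃ B ∈ EllSet (fun A B : ↥(Minf F) => Mle F A.val B.val) (fun n A => rMat F n A.val) a A,
        closedSpan B.val = W ∧
        ∀ B' ∈ EllSet (fun A B : ↥(Minf F) => Mle F A.val B.val) (fun n A => rMat F n A.val) a B,
          closedSpan B'.val ∈ Nb N W := by
  obtain ⟨hCA, k, rfl⟩ := mem_ellSet_iff.1 hC
  obtain ⟨N, hN⟩ := exists_height_rMat C.2 k
  refine ⟨N, fun W hW => ?_⟩
  obtain ⟨B, hB, rfl⟩ := hW.1.exists_closedSpan_eq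
  refine ⟨⟨B, hB⟩, mem_ellSet_iff.2 ⟨hW.2.1.trans hCA, (hN B hB).2 hW.2.2⟩, rfl, fun B' hB' => ?_⟩
  obtain ⟨hle, hB'⟩ := mem_ellSet_iff.1 hB'
  exact ⟨isLarge_closedSpan B'.2, hle, ((hN _ B'.2).1 hB').trans hW.2.2.symm⟩

theorem isNbOpen_closedSpans {X : Set ↥(Minf F)}
    (hX : IsOpen[EllTop (fun A B : ↥(Minf F) => Mle F A.val B.val)
      (fun n A => rMat F n A.val)] X) : IsNbOpen (closedSpans X) := by
  rintro _ ⟨B, hB, rfl⟩ -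
  obtain ⟨N, hN⟩ := exists_forall_mem_nb_mem_of_isOpen hX hB
  refine ⟨N, fun W hW => ?_⟩
  obtain ⟨A, hA, rfl⟩ := hW.1.exists_closedSpan_eq
  exact ⟨⟨A, hA⟩, hN ⟨A, hA⟩ hW, rfl⟩

theorem isRamseyNullSet_of_isMeagre {M : Set ↥(Minf F)}
    (hM : @IsMeagre _ (EllTop (fun A B : ↥(Minf F) => Mle F A.val B.val)
      (fun n A => rMat F n A.val)) M) :
    IsRamseyNullSet (fun A B : ↥(Minf F) => Mle F A.val B.val) (fun n A => rMat F n A.val) M := by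
  let t := EllTop (fun A B : ↥(Minf F) => Mle F A.val B.val) (fun n A => rMat F n A.val)
  obtain ⟨S, hopen, hdense, hcount, hsub⟩ := mem_residual_iff.1 hM
  obtain ⟨D, hD⟩ := (hcount.insert Set.univ).exists_eq_range (Set.insert_nonempty _ _)
  have hDo (k : ℕ) : IsOpen (D k) ∧ Dense (D k) := by
    have hk : D k ∈ insert Set.univ S := hD ▸ Set.mem_range_self k
    rcases hk with hk | hk
    · rw [hk]
      exact ⟨isOpen_univ, dense_univ⟩
    · exact ⟨hopen _ hk, hdense _ hk⟩
  intro a A ⟨C, hC⟩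
  obtain ⟨N, hN⟩ := exists_height_ellSet hC
  obtain ⟨W, hW, hWD⟩ := exists_nb_forall_mem (𝒟 := fun k => closedSpans (D k))
    (fun k => isNbOpen_closedSpans (hDo k).1)
    (fun k N V hV => by
      obtain ⟨B, hB, rfl⟩ := hV.exists_closedSpan_eq
      obtain ⟨a, hBa, ha⟩ := exists_ellSet_subset_nb N ⟨B, hB⟩
      obtain ⟨B', hB'a, hB'D⟩ := (hDo k).2.inter_open_nonempty _ (isOpen_ellSet a ⟨B, hB⟩)
        ⟨_, hBa⟩
      exact ⟨_, ha B' hB'a, closedSpan_mem_closedSpans.2 hB'D⟩)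
    N (isLarge_closedSpan C.2)
  obtain ⟨B, hB, -, hBW⟩ := hN W hW
  refine ⟨B, hB, Set.eq_empty_of_forall_notMem fun B' ⟨hB', hB'M⟩ => ?_⟩
  refine hsub (Set.mem_sInter.2 fun s hs => ?_) hB'M
  obtain ⟨k, rfl⟩ : s ∈ Set.range D := hD ▸ Set.mem_insert_of_mem _ hs
  exact closedSpan_mem_closedSpans.1 (hWD _ (hBW B' hB') k)

theorem isRamseySet_of_hasPropertyOfBaire {S : Set ↥(Minf F)}
    (hS : HasPropertyOfBaire (EllTop (fun A B : ↥(Minf F) => Mle F A.val B.val)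
      (fun n A => rMat F n A.val)) S) :
    IsRamseySet (fun A B : ↥(Minf F) => Mle F A.val B.val) (fun n A => rMat F n A.val) S := by
  obtain ⟨X, M, hX, hM, rfl⟩ := hS
  intro a A hA
  obtain ⟨C, hC, hCM⟩ := isRamseyNullSet_of_isMeagre hM a A hA
  obtain ⟨N, hN⟩ := exists_height_ellSet hC
  obtain ⟨W, hW, hWX⟩ :=
    (isNbOpen_closedSpans hX).exists_nb_subset_or_disjoint N (isLarge_closedSpan C.2)
  obtain ⟨B, hB, rfl, hBW⟩ := hN W hW
  have hnotM {B'} (hB' : B' ∈ EllSet (fun A B : ↥(Minf F) => Mle F A.val B.val)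
      (fun n A => rMat F n A.val) a B) : B' ∉ M := fun h => by
    have hB'' := mem_ellSet_iff.1 hB'
    have hmem := mem_ellSet_iff.2 ⟨hB''.1.trans hW.2.1, hB''.2⟩
    exact Set.notMem_empty B' (hCM ▸ ⟨hmem, h⟩)
  refine ⟨B, hB, hWX.imp (fun h B' hB' => ?_) fun h =>
    Set.eq_empty_of_forall_notMem fun B' ⟨hB', hB'S⟩ => ?_⟩
  · exact Or.inl ⟨closedSpan_mem_closedSpans.1 (h (hBW B' hB')), hnotM hB'⟩
  · rcases hB'S with hB'S | hB'S
    · exact h _ (hBW B' hB') (closedSpan_mem_closedSpans.2 hB'S.1)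
    · exact hnotM hB' hB'S.1

end Ellentuck

end EchelonRamsey

/-- **Theorem (Carlson).** For every finite field `F`, `(M_∞(F), ≤, r)` is a
topological Ramsey space. -/
theorem minf_is_topological_ramsey_space (F : Type) [Field F] [Fintype F] :
    IsTopRamseySpace
      (fun A B : ↥(Minf F) => Mle F A.val B.val)
      (fun n (A : ↥(Minf F)) => rMat F n A.val) :=
  ⟨fun _ hS => EchelonRamsey.isRamseySet_of_hasPropertyOfBaire hS,
    fun _ hS => EchelonRamsey.isRamseyNullSet_of_isMeagre hS⟩
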